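/- Let I_1,…,I_p ⊆ {1,…,n}, let J_1,…,J_p be disjoint finite index sets with polynomials g_i ∈ ℝ[x(I_j)] for i ∈ J_j, and let f = Σ_{j=1}^p f_j with f_j ∈ ℝ[x(I_j)]. Assume that for every j there is some i ∈ J_j with g_i = R_j − ‖x(I_j)‖₂² for some R_j > 0. Then for every integer k ≥ max{⌈f_j⌉, ⌈g_i⌉} there exist a real ξ and symmetric positive definite matrices G_0^{(j)} (indexed by ℕ^{I_j}_k) and G_i^{(j)} (indexed by ℕ^{I_j}_{k-⌈g_i⌉}), i ∈ J_j, j ∈ {1,…,p}, such that f − ξ = Σ_{j=1}^p [ (v_k^{I_j})^T G_0^{(j)} v_k^{I_j} + Σ_{i∈J_j} g_i · (v_{k-⌈g_i⌉}^{I_j})^T G_i^{(j)} v_{k-⌈g_i⌉}^{I_j} ] holds in ℝ[x]. (That is, Slater's condition holds for the sparse SOS relaxation of order k.) -/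

import Mathlib

open MvPolynomial

/-- `⌈p⌉ := ⌈deg(p)/2⌉`. -/
noncomputable def halfCeil {n : ℕ} (p : MvPolynomial (Fin n) ℝ) : ℕ :=
  (p.totalDegree + 1) / 2

/-- The finite set `ℕ^n_d` of multi-indices `α ∈ ℕ^n` with `|α| ≤ d`. -/
noncomputable def degLE (n d : ℕ) : Finset (Fin n →₀ ℕ) :=
  (Finset.Iic (Finsupp.equivFunOnFinite.symm fun _ : Fin n => d)).filter
    fun α => (∑ i, α i) ≤ d

/-- The polynomial `v_d^T G v_d = Σ_{α,β ∈ ℕ^n_d} G_{α,β} x^{α+β}` associated with a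
matrix `G` indexed by `ℕ^n_d`. -/
noncomputable def quadForm (n d : ℕ)
    (G : Matrix ↥(degLE n d) ↥(degLE n d) ℝ) : MvPolynomial (Fin n) ℝ :=
  ∑ α : ↥(degLE n d), ∑ β : ↥(degLE n d), monomial (α.1 + β.1) (G α β)

/-- The moment matrix `M_d(y)`, with entries `(M_d(y))_{α,β} = y_{α+β}`. -/
noncomputable def momentMat (n d : ℕ) (y : (Fin n →₀ ℕ) → ℝ) :
    Matrix ↥(degLE n d) ↥(degLE n d) ℝ :=
  Matrix.of fun α β => y (α.1 + β.1)

/-- The localizing matrix `M_d(q·y)`, with entries `Σ_γ q_γ y_{α+β+γ}`. -/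
noncomputable def locMat (n d : ℕ) (q : MvPolynomial (Fin n) ℝ)
    (y : (Fin n →₀ ℕ) → ℝ) : Matrix ↥(degLE n d) ↥(degLE n d) ℝ :=
  Matrix.of fun α β => ∑ γ ∈ q.support, coeff γ q * y (α.1 + β.1 + γ)

/-- The finite set `ℕ^I_d` of multi-indices `α` with `|α| ≤ d` supported on `I`. -/
noncomputable def degLEI (n : ℕ) (I : Finset (Fin n)) (d : ℕ) : Finset (Fin n →₀ ℕ) :=
  (degLE n d).filter fun α => α.support ⊆ I

/-- The polynomial `(v_d^I)^T G v_d^I = Σ_{α,β ∈ ℕ^I_d} G_{α,β} x^{α+β}`. -/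
noncomputable def quadFormI (n : ℕ) (I : Finset (Fin n)) (d : ℕ)
    (G : Matrix ↥(degLEI n I d) ↥(degLEI n I d) ℝ) : MvPolynomial (Fin n) ℝ :=
  ∑ α : ↥(degLEI n I d), ∑ β : ↥(degLEI n I d), monomial (α.1 + β.1) (G α β)

lemma mem_degLEI' {n : ℕ} {I : Finset (Fin n)} {d : ℕ} {α : Fin n →₀ ℕ} :
    α ∈ degLEI n I d ↔ α.degree ≤ d ∧ α.support ⊆ I := by
  unfold degLEI degLE
  rw [Finset.mem_filter, Finset.mem_filter, Finset.mem_Iic, Finsupp.degree_eq_sum]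
  constructor
  · rintro ⟨⟨_, h⟩, h2⟩
    exact ⟨h, h2⟩
  · rintro ⟨h, h2⟩
    refine ⟨⟨?_, h⟩, h2⟩
    intro i
    exact (Finset.single_le_sum (f := fun i => α i) (fun _ _ => Nat.zero_le _) (Finset.mem_univ i)).trans h

lemma exists_sub_deg {n : ℕ} (γ : Fin n →₀ ℕ) (m : ℕ) (hm : m ≤ γ.degree) :
    ∃ α β : Fin n →₀ ℕ, α + β = γ ∧ α.degree = m := by
  induction m with
  | zero => exact ⟨0, γ, by simp, by simp⟩
  | succ m ih =>
    obtain ⟨α, β, h, hα⟩ := ih (by omega)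
    have hβ : β ≠ 0 := by
      rintro rfl
      simp at h
      subst h
      omega
    obtain ⟨v, hv⟩ := Finsupp.ne_iff.1 hβ
    have hle : Finsupp.single v 1 ≤ β := by
      rw [Finsupp.single_le_iff]
      simp at hv
      omega
    refine ⟨α + Finsupp.single v 1, β - Finsupp.single v 1, ?_, ?_⟩
    · rw [add_assoc, add_tsub_cancel_of_le hle, h]
    · rw [map_add, hα, Finsupp.degree_single]

lemma quadFormI_add (n : ℕ) (I : Finset (Fin n)) (d : ℕ)
    (G H : Matrix ↥(degLEI n I d) ↥(degLEI n I d) ℝ) :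
    quadFormI n I d (G + H) = quadFormI n I d G + quadFormI n I d H := by
  simp [quadFormI, Finset.sum_add_distrib]

lemma quadFormI_transpose (n : ℕ) (I : Finset (Fin n)) (d : ℕ)
    (G : Matrix ↥(degLEI n I d) ↥(degLEI n I d) ℝ) :
    quadFormI n I d G.transpose = quadFormI n I d G := by
  unfold quadFormI
  rw [Finset.sum_comm]
  simp [add_comm]

lemma quadFormI_smul (n : ℕ) (I : Finset (Fin n)) (d : ℕ) (c : ℝ)
    (G : Matrix ↥(degLEI n I d) ↥(degLEI n I d) ℝ) :
    quadFormI n I d (c • G) = c • quadFormI n I d G := by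
  simp [quadFormI, Finset.smul_sum, smul_monomial]

/-- diagonal forms -/
noncomputable def Dq (n : ℕ) (I : Finset (Fin n)) (d : ℕ) (w : (Fin n →₀ ℕ) → ℝ) :
    MvPolynomial (Fin n) ℝ := ∑ α ∈ degLEI n I d, monomial (α + α) (w α)

lemma quadFormI_diagonal (n : ℕ) (I : Finset (Fin n)) (d : ℕ) (w : (Fin n →₀ ℕ) → ℝ) :
    quadFormI n I d (Matrix.diagonal fun α => w α.1) = Dq n I d w := by
  unfold quadFormI Dq
  refine Eq.trans ?_ (Finset.sum_coe_sort (degLEI n I d)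
    (fun α => (monomial (α + α) (w α) : MvPolynomial (Fin n) ℝ)))
  refine Finset.sum_congr rfl fun α _ => ?_
  rw [Finset.sum_eq_single α]
  · simp
  · intro β _ h
    rw [Matrix.diagonal_apply_ne _ h.symm, map_zero]
  · simp

lemma exists_gram (n : ℕ) (I : Finset (Fin n)) (k : ℕ) (h : MvPolynomial (Fin n) ℝ)
    (hv : h.vars ⊆ I) (hd : h.totalDegree ≤ 2 * k) :
    ∃ H : Matrix ↥(degLEI n I k) ↥(degLEI n I k) ℝ, H.IsSymm ∧ quadFormI n I k H = h := by
  classical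
  have key : ∃ H : Matrix ↥(degLEI n I k) ↥(degLEI n I k) ℝ, quadFormI n I k H = h := by
    have hmon : ∀ γ ∈ h.support, ∃ H : Matrix ↥(degLEI n I k) ↥(degLEI n I k) ℝ,
        quadFormI n I k H = monomial γ (coeff γ h) := by
      intro γ hγ
      have h1 : γ.degree ≤ 2 * k := (le_totalDegree hγ).trans hd
      have h2 : γ.support ⊆ I := by
        intro v hvv
        exact hv ((mem_vars_iff_mem_support v).2 ⟨γ, hγ, hvv⟩)
      obtain ⟨α, β, hab, hα⟩ := exists_sub_deg γ (min k γ.degree) (min_le_right _ _)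
      have hdeg : α.degree + β.degree = γ.degree := by rw [← hab, map_add]
      have hαm : α ∈ degLEI n I k := by
        rw [mem_degLEI']
        refine ⟨by omega, fun v hvv => h2 ?_⟩
        rw [← hab]
        simp at hvv ⊢
        omega
      have hβm : β ∈ degLEI n I k := by
        rw [mem_degLEI']
        refine ⟨by omega, fun v hvv => h2 ?_⟩
        rw [← hab]
        simp at hvv ⊢
        omega
      refine ⟨Matrix.single ⟨α, hαm⟩ ⟨β, hβm⟩ (coeff γ h), ?_⟩
      unfold quadFormI
      rw [Finset.sum_eq_single ⟨α, hαm⟩, Finset.sum_eq_single ⟨β, hβm⟩]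
      · simp [hab]
      · intro b _ hb
        rw [Matrix.single_apply_of_ne _ _ _ _ _ (by rintro ⟨_, h⟩; exact hb h.symm), map_zero]
      · simp
      · intro a _ ha
        refine Finset.sum_eq_zero fun b _ => ?_
        rw [Matrix.single_apply_of_ne _ _ _ _ _ (by rintro ⟨h, _⟩; exact ha h.symm), map_zero]
      · simp
    have hsum : ∀ S : Finset (Fin n →₀ ℕ), S ⊆ h.support →
        ∃ H : Matrix ↥(degLEI n I k) ↥(degLEI n I k) ℝ,
          quadFormI n I k H = ∑ γ ∈ S, monomial γ (coeff γ h) := by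
      intro S
      induction S using Finset.induction_on with
      | empty => intro _; exact ⟨0, by simp [quadFormI]⟩
      | insert a S ha ih =>
        intro hS
        obtain ⟨H1, h1⟩ := ih ((Finset.subset_insert _ _).trans hS)
        obtain ⟨H2, h2⟩ := hmon a (hS (Finset.mem_insert_self _ _))
        exact ⟨H2 + H1, by rw [quadFormI_add, h1, h2, Finset.sum_insert ha]⟩
    obtain ⟨H, hH⟩ := hsum h.support subset_rfl
    exact ⟨H, by rw [hH]; exact (as_sum h).symm⟩
  obtain ⟨H, hH⟩ := key
  refine ⟨(1/2 : ℝ) • (H + H.transpose), ?_, ?_⟩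
  · unfold Matrix.IsSymm
    rw [Matrix.transpose_smul, Matrix.transpose_add, Matrix.transpose_transpose, add_comm]
  · rw [quadFormI_smul, quadFormI_add, quadFormI_transpose, hH, ← two_smul ℝ h, smul_smul]
    norm_num

lemma exists_posDef {m : Type*} [Fintype m] [DecidableEq m] (H : Matrix m m ℝ) (hH : H.IsSymm) :
    ∃ M : ℝ, 0 < M ∧ ∀ u : m → ℝ, (∀ a, M ≤ u a) → (H + Matrix.diagonal u).PosDef := by
  refine ⟨∑ a, ∑ b, |H a b| + 1, by positivity, fun u hu => ?_⟩
  refine Matrix.PosDef.of_dotProduct_mulVec_pos ?_ ?_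
  · rw [Matrix.IsHermitian, Matrix.conjTranspose_eq_transpose_of_trivial, Matrix.transpose_add,
      Matrix.diagonal_transpose, hH]
  · intro x hx
    have hN : 0 < ∑ a, x a ^ 2 := by
      obtain ⟨a, ha⟩ := Function.ne_iff.1 hx
      exact Finset.sum_pos' (fun _ _ => sq_nonneg _) ⟨a, Finset.mem_univ _, by simp at ha; positivity⟩
    set N := ∑ a, x a ^ 2 with hNdef
    have hle : ∀ a, x a ^ 2 ≤ N := fun a =>
      Finset.single_le_sum (f := fun a => x a ^ 2) (fun _ _ => sq_nonneg _) (Finset.mem_univ a)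
    have e : star x ⬝ᵥ (H + Matrix.diagonal u).mulVec x
        = ∑ a, ∑ b, H a b * (x a * x b) + ∑ a, u a * x a ^ 2 := by
      rw [Matrix.add_mulVec, dotProduct_add]
      congr 1
      · simp only [dotProduct, Matrix.mulVec, star_trivial, Finset.mul_sum]
        refine Finset.sum_congr rfl fun a _ => Finset.sum_congr rfl fun b _ => by ring
      · simp only [dotProduct, Matrix.mulVec_diagonal, star_trivial]
        refine Finset.sum_congr rfl fun a _ => by ring
    rw [e]
    have h1 : ∑ a, ∑ b, -(|H a b| * N) ≤ ∑ a, ∑ b, H a b * (x a * x b) := by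
      refine Finset.sum_le_sum fun a _ => Finset.sum_le_sum fun b _ => ?_
      have hab : |x a * x b| ≤ N := by
        rw [abs_le]
        constructor <;> nlinarith [hle a, hle b, sq_nonneg (x a + x b), sq_nonneg (x a - x b)]
      have : |H a b * (x a * x b)| ≤ |H a b| * N := by
        rw [abs_mul]
        exact mul_le_mul_of_nonneg_left hab (abs_nonneg _)
      exact (abs_le.1 this).1
    have h2 : (∑ a, ∑ b, |H a b| + 1) * N ≤ ∑ a, u a * x a ^ 2 := by
      rw [hNdef, Finset.mul_sum]
      exact Finset.sum_le_sum fun a _ => mul_le_mul_of_nonneg_right (hu a) (sq_nonneg _)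
    simp only [Finset.sum_neg_distrib, ← Finset.sum_mul] at h1
    nlinarith

lemma X_sq_mul_Dq (n : ℕ) (I : Finset (Fin n)) (d : ℕ) (w : (Fin n →₀ ℕ) → ℝ) (v : Fin n)
    (hv : v ∈ I) :
    X v ^ 2 * Dq n I d w =
      Dq n I (d + 1) (fun β => if 1 ≤ β v then w (β - Finsupp.single v 1) else 0) := by
  unfold Dq
  have e : ∀ β : Fin n →₀ ℕ, monomial (β + β)
      (if 1 ≤ β v then w (β - Finsupp.single v 1) else 0)
      = if 1 ≤ β v then monomial (β + β) (w (β - Finsupp.single v 1)) else 0 := by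
    intro β
    split_ifs <;> simp
  simp only [e]
  rw [← Finset.sum_filter, Finset.mul_sum]
  refine Finset.sum_nbij' (fun α => α + Finsupp.single v 1) (fun β => β - Finsupp.single v 1)
    ?_ ?_ ?_ ?_ ?_
  · intro α hα
    rw [mem_degLEI'] at hα
    rw [Finset.mem_filter, mem_degLEI']
    refine ⟨⟨?_, ?_⟩, by simp⟩
    · rw [map_add, Finsupp.degree_single]; omega
    · refine Finsupp.support_add.trans (Finset.union_subset hα.2 ?_)
      exact Finsupp.support_single_subset.trans (by simpa using hv)
  · intro β hβ
    rw [Finset.mem_filter, mem_degLEI'] at hβ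
    rw [mem_degLEI']
    have hle : Finsupp.single v 1 ≤ β := Finsupp.single_le_iff.2 hβ.2
    have := congrArg Finsupp.degree (add_tsub_cancel_of_le hle)
    rw [map_add, Finsupp.degree_single] at this
    exact ⟨by omega, Finsupp.support_tsub.trans hβ.1.2⟩
  · intro α _
    simp
  · intro β hβ
    rw [Finset.mem_filter] at hβ
    exact tsub_add_cancel_of_le (Finsupp.single_le_iff.2 hβ.2)
  · intro α _
    rw [X_pow_eq_monomial, monomial_mul, add_tsub_cancel_right, one_mul]
    congr 2
    rw [show (2 : ℕ) = 1 + 1 from rfl, Finsupp.single_add]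
    abel

lemma Dq_sub (n : ℕ) (I : Finset (Fin n)) (d : ℕ) (w u : (Fin n →₀ ℕ) → ℝ) :
    Dq n I d w - Dq n I d u = Dq n I d (fun α => w α - u α) := by
  simp [Dq, Finset.sum_sub_distrib]

lemma C_mul_Dq (n : ℕ) (I : Finset (Fin n)) (d k : ℕ) (hdk : d ≤ k) (R : ℝ)
    (w : (Fin n →₀ ℕ) → ℝ) :
    C R * Dq n I d w = Dq n I k (fun β => if β ∈ degLEI n I d then R * w β else 0) := by
  unfold Dq
  have e : ∀ β : Fin n →₀ ℕ, monomial (β + β)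
      (if β ∈ degLEI n I d then R * w β else 0)
      = if β ∈ degLEI n I d then monomial (β + β) (R * w β) else 0 := by
    intro β
    split_ifs <;> simp
  simp only [e]
  rw [← Finset.sum_filter, Finset.filter_mem_eq_inter, Finset.inter_eq_right.2, Finset.mul_sum]
  · simp [C_mul_monomial]
  · intro α
    simp only [mem_degLEI']
    exact fun h => ⟨h.1.trans hdk, h.2⟩

lemma exists_weights (n : ℕ) (I : Finset (Fin n)) (d k : ℕ)
    (hdk : (I = ∅ ∧ d ≤ k) ∨ d + 1 = k) (R M : ℝ) (hR : 0 < R) (hM : 0 < M) :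
    ∃ w u : (Fin n →₀ ℕ) → ℝ, (∀ α, 0 < w α) ∧ (∀ β ∈ degLEI n I k, β ≠ 0 → M ≤ u β) ∧
      (∑ v ∈ I, X v ^ 2 - C R) * Dq n I d w = Dq n I k u := by
  rcases hdk with ⟨rfl, hdk⟩ | rfl
  · refine ⟨fun _ => 1, fun β => - (if β ∈ degLEI n ∅ d then R * 1 else 0), by simp, ?_, ?_⟩
    · intro β hβ h0
      rw [mem_degLEI'] at hβ
      simp at hβ
      exact absurd hβ.2 h0
    · rw [Finset.sum_empty, zero_sub, neg_mul, C_mul_Dq n ∅ d k hdk]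
      simp only [Dq, map_neg, Finset.sum_neg_distrib]
  · set w : (Fin n →₀ ℕ) → ℝ := fun γ => M * (R + 1) ^ (d + 1 - γ.degree) with hw
    have hwpos : ∀ α, 0 < w α := fun α => by simp only [hw]; positivity
    refine ⟨w, fun β => ∑ v ∈ I, (if 1 ≤ β v then w (β - Finsupp.single v 1) else 0)
      - (if β ∈ degLEI n I d then R * w β else 0), hwpos, ?_, ?_⟩
    · intro β hβ h0
      rw [mem_degLEI'] at hβ
      obtain ⟨v, hv⟩ := Finsupp.ne_iff.1 h0
      simp only [Finsupp.coe_zero, Pi.zero_apply] at hv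
      have hvI : v ∈ I := hβ.2 (Finsupp.mem_support_iff.2 hv)
      have h1 : 1 ≤ β v := by omega
      have hle : Finsupp.single v 1 ≤ β := Finsupp.single_le_iff.2 h1
      have hdeg := congrArg Finsupp.degree (add_tsub_cancel_of_le hle)
      rw [map_add, Finsupp.degree_single] at hdeg
      have s1 : w (β - Finsupp.single v 1)
          ≤ ∑ v ∈ I, (if 1 ≤ β v then w (β - Finsupp.single v 1) else 0) := by
        have := Finset.single_le_sum
          (f := fun v => if 1 ≤ β v then w (β - Finsupp.single v 1) else 0)
          (s := I) (fun i _ => by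
            split_ifs
            · exact (hwpos _).le
            · exact le_rfl) hvI
        simpa [h1] using this
      have s2 : (if β ∈ degLEI n I d then R * w β else 0) ≤ R * w β := by
        split_ifs
        · exact le_rfl
        · exact (mul_pos hR (hwpos β)).le
      have s3 : w (β - Finsupp.single v 1) = (R + 1) * w β := by
        simp only [hw]
        have hh : d + 1 - (β - Finsupp.single v 1).degree = (d + 1 - β.degree) + 1 := by
          have := hβ.1
          clear_value w
          omega
        rw [hh, pow_succ]
        ring
      have s4 : M ≤ w β := by
        simp only [hw]
        exact le_mul_of_one_le_right hM.le (one_le_pow₀ (by linarith))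
      dsimp only
      linarith
    · rw [← Dq_sub, sub_mul, C_mul_Dq n I d (d + 1) (by omega), Finset.sum_mul]
      congr 1
      rw [Finset.sum_congr rfl fun v hv => X_sq_mul_Dq n I d w v hv]
      unfold Dq
      rw [Finset.sum_comm]
      simp

lemma Dq_vars (n : ℕ) (I : Finset (Fin n)) (d : ℕ) (w : (Fin n →₀ ℕ) → ℝ) :
    (Dq n I d w).vars ⊆ I := by
  classical
  refine (vars_sum_subset _ _).trans ?_
  refine Finset.biUnion_subset.2 fun α hα => ?_
  rw [mem_degLEI'] at hα
  by_cases h : w α = 0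
  · simp [h]
  · rw [vars_monomial h]
    exact Finsupp.support_add.trans (Finset.union_subset hα.2 hα.2)

lemma Dq_totalDegree (n : ℕ) (I : Finset (Fin n)) (d : ℕ) (w : (Fin n →₀ ℕ) → ℝ) :
    (Dq n I d w).totalDegree ≤ 2 * d := by
  refine totalDegree_finsetSum_le fun α hα => ?_
  rw [mem_degLEI'] at hα
  refine (totalDegree_monomial_le _ _).trans ?_
  change (α + α).degree ≤ _
  rw [map_add]
  omega

lemma core (n : ℕ) (I : Finset (Fin n)) (d k : ℕ)
    (hdk : (I = ∅ ∧ d ≤ k) ∨ d + 1 = k) (R : ℝ) (hR : 0 < R) (h : MvPolynomial (Fin n) ℝ)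
    (hv : h.vars ⊆ I) (hd : h.totalDegree ≤ 2 * k) :
    ∃ ξ : ℝ, ∃ G0 : Matrix ↥(degLEI n I k) ↥(degLEI n I k) ℝ, G0.PosDef ∧
      ∃ w : (Fin n →₀ ℕ) → ℝ, (∀ α, 0 < w α) ∧
      h - C ξ = quadFormI n I k G0 + (C R - ∑ v ∈ I, X v ^ 2) * Dq n I d w := by
  classical
  obtain ⟨H, hs, hH⟩ := exists_gram n I k h hv hd
  obtain ⟨M, hM, hpd⟩ := exists_posDef H hs
  obtain ⟨w, u, hw, hu, e⟩ := exists_weights n I d k hdk R M hR hM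
  refine ⟨u 0 - M, H + Matrix.diagonal (fun α => (Function.update u 0 M) α.1), ?_, w, hw, ?_⟩
  · refine hpd _ fun a => ?_
    by_cases ha : a.1 = 0
    · simp [ha]
    · rw [Function.update_of_ne ha]
      exact hu _ a.2 ha
  · rw [quadFormI_add, quadFormI_diagonal, hH]
    have : Dq n I k u - Dq n I k (Function.update u 0 M) = C (u 0 - M) := by
      rw [Dq_sub]
      unfold Dq
      rw [Finset.sum_eq_single 0]
      · simp
      · intro b _ hb
        simp [Function.update_of_ne hb]
      · intro h0
        exact absurd (mem_degLEI'.2 (by simp)) h0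
    rw [← this, ← e]
    ring

lemma halfCeil_ball (n : ℕ) (I : Finset (Fin n)) (hI : I.Nonempty) (R : ℝ) :
    halfCeil (C R - ∑ v ∈ I, X v ^ 2 : MvPolynomial (Fin n) ℝ) = 1 := by
  classical
  have h1 : (C R - ∑ v ∈ I, X v ^ 2 : MvPolynomial (Fin n) ℝ).totalDegree ≤ 2 := by
    refine (totalDegree_sub _ _).trans (max_le (by simp) ?_)
    refine totalDegree_finsetSum_le fun v _ => ?_
    rw [totalDegree_X_pow]
  have h2 : 2 ≤ (C R - ∑ v ∈ I, X v ^ 2 : MvPolynomial (Fin n) ℝ).totalDegree := by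
    obtain ⟨v, hv⟩ := hI
    have hc : coeff (Finsupp.single v 2) (C R - ∑ v ∈ I, X v ^ 2 : MvPolynomial (Fin n) ℝ) = -1 := by
      rw [coeff_sub, coeff_C, coeff_sum, if_neg, Finset.sum_eq_single v]
      · simp [X_pow_eq_monomial]
      · intro b _ hb
        rw [X_pow_eq_monomial, coeff_monomial, if_neg]
        intro h
        exact hb ((Finsupp.single_left_inj (by norm_num)).1 h)
      · exact fun h => absurd hv h
      · intro h
        have := DFunLike.congr_fun h v
        simp at this
    have := le_totalDegree (mem_support_iff.2 (by rw [hc]; norm_num :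
      coeff (Finsupp.single v 2) (C R - ∑ v ∈ I, X v ^ 2 : MvPolynomial (Fin n) ℝ) ≠ 0))
    simpa using this
  unfold halfCeil
  omega

lemma perClique (n : ℕ) {ι : Type} [DecidableEq ι] (I : Finset (Fin n)) (J : Finset ι)
    (g : ι → MvPolynomial (Fin n) ℝ) (hg : ∀ i ∈ J, (g i).vars ⊆ I)
    (f : MvPolynomial (Fin n) ℝ) (hf : f.vars ⊆ I)
    (hball : ∃ i ∈ J, ∃ Rj : ℝ, 0 < Rj ∧ g i = C Rj - ∑ v ∈ I, X v ^ 2)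
    (k : ℕ) (hfk : halfCeil f ≤ k) (hgk : ∀ i ∈ J, halfCeil (g i) ≤ k) :
    ∃ ξ : ℝ, ∃ G0 : Matrix ↥(degLEI n I k) ↥(degLEI n I k) ℝ, G0.PosDef ∧
      ∃ W : ι → (Fin n →₀ ℕ) → ℝ, (∀ i α, 0 < W i α) ∧
      f - C ξ = quadFormI n I k G0 + ∑ i ∈ J, g i * Dq n I (k - halfCeil (g i)) (W i) := by
  classical
  obtain ⟨i0, hi0, R, hR, e0⟩ := hball
  have hdk : (I = ∅ ∧ k - halfCeil (g i0) ≤ k) ∨ k - halfCeil (g i0) + 1 = k := by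
    rcases I.eq_empty_or_nonempty with h | h
    · exact Or.inl ⟨h, Nat.sub_le _ _⟩
    · right
      have := hgk i0 hi0
      have h1 : halfCeil (g i0) = 1 := by rw [e0]; exact halfCeil_ball n I h R
      omega
  set q := ∑ i ∈ J.erase i0, g i * Dq n I (k - halfCeil (g i)) (fun _ => 1) with hq
  have hqv : q.vars ⊆ I := by
    refine (vars_sum_subset _ _).trans (Finset.biUnion_subset.2 fun i hi => ?_)
    exact (vars_mul _ _).trans
      (Finset.union_subset (hg i (Finset.mem_of_mem_erase hi)) (Dq_vars _ _ _ _))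
  have hqd : q.totalDegree ≤ 2 * k := by
    refine totalDegree_finsetSum_le fun i hi => ?_
    refine (totalDegree_mul _ _).trans ?_
    have h1 := Dq_totalDegree n I (k - halfCeil (g i)) (fun _ => 1)
    have h2 := hgk i (Finset.mem_of_mem_erase hi)
    have h3 : (g i).totalDegree ≤ 2 * halfCeil (g i) := by unfold halfCeil; omega
    omega
  obtain ⟨ξ, G0, hG0, w, hw, e⟩ := core n I _ k hdk R hR (f - q)
    ((vars_sub_subset (p := f) (q := q)).trans (Finset.union_subset hf hqv))
    ((totalDegree_sub _ _).trans (max_le (by unfold halfCeil at hfk; omega) hqd))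
  refine ⟨ξ, G0, hG0, fun i => if i = i0 then w else fun _ => 1, ?_, ?_⟩
  · intro i α
    dsimp only
    split_ifs
    · exact hw α
    · exact one_pos
  · rw [← Finset.add_sum_erase _ _ hi0]
    have : ∑ i ∈ J.erase i0, g i * Dq n I (k - halfCeil (g i))
        (if i = i0 then w else fun _ => 1) = q := by
      refine Finset.sum_congr rfl fun i hi => ?_
      rw [if_neg (Finset.ne_of_mem_erase hi)]
    simp only [this, if_true]
    rw [← e0] at e
    linear_combination e

/-- Slater's condition for the sparse SOS relaxation: with correlative
sparsity pattern `(I_j, J_j)`, `f = Σ_j f_j` (`f_j ∈ ℝ[x(I_j)]`) and a ball constraint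
`R_j − ‖x(I_j)‖₂² ∈ g_{J_j}` on each clique, for every order `k` there exist `ξ ∈ ℝ` and
symmetric positive definite matrices `G_0^{(j)}`, `G_i^{(j)}` with
`f − ξ = Σ_j [ (v_k^{I_j})^T G_0^{(j)} v_k^{I_j}
    + Σ_{i∈J_j} g_i (v_{k-⌈g_i⌉}^{I_j})^T G_i^{(j)} v_{k-⌈g_i⌉}^{I_j} ]`. -/
theorem stmt11 (n p : ℕ) {ι : Type} [DecidableEq ι]
    (I : Fin p → Finset (Fin n)) (J : Fin p → Finset ι)
    (hdisj : ∀ j j' : Fin p, j ≠ j' → Disjoint (J j) (J j'))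
    (g : ι → MvPolynomial (Fin n) ℝ)
    (hgvars : ∀ j : Fin p, ∀ i ∈ J j, (g i).vars ⊆ I j)
    (f : Fin p → MvPolynomial (Fin n) ℝ)
    (hfvars : ∀ j : Fin p, (f j).vars ⊆ I j)
    (hball : ∀ j : Fin p, ∃ i ∈ J j, ∃ Rj : ℝ, 0 < Rj ∧
      g i = C Rj - ∑ v ∈ I j, X v ^ 2) :
    ∀ k : ℕ, (∀ j, halfCeil (f j) ≤ k) → (∀ j : Fin p, ∀ i ∈ J j, halfCeil (g i) ≤ k) →
      ∃ ξ : ℝ,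
      ∃ G0 : ∀ j : Fin p, Matrix ↥(degLEI n (I j) k) ↥(degLEI n (I j) k) ℝ,
        (∀ j, (G0 j).PosDef) ∧
      ∃ G : ∀ (j : Fin p) (i : ι),
          Matrix ↥(degLEI n (I j) (k - halfCeil (g i)))
            ↥(degLEI n (I j) (k - halfCeil (g i))) ℝ,
        (∀ j : Fin p, ∀ i ∈ J j, (G j i).PosDef) ∧
        (∑ j, f j) - C ξ
          = ∑ j, (quadFormI n (I j) k (G0 j)
              + ∑ i ∈ J j, g i * quadFormI n (I j) (k - halfCeil (g i)) (G j i)) := by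
  intro k hfk hgk
  choose ξ G0 hG0 W hW e using fun j => perClique n (I j) (J j) g (hgvars j) (f j) (hfvars j)
    (hball j) k (hfk j) (hgk j)
  refine ⟨∑ j, ξ j, G0, hG0, fun j i => Matrix.diagonal fun α => W j i α.1, ?_, ?_⟩
  · intro j i _
    exact Matrix.PosDef.diagonal fun α => hW j i α.1
  · simp only [quadFormI_diagonal]
    rw [map_sum, ← Finset.sum_sub_distrib]
    exact Finset.sum_congr rfl fun j _ => e j
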